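/- Let G be a weighted graph on the vertex set {1,…,n} (n ≥ 2), let 0 ≤ ε < 1, and let Ḡ be an ε-spectral sparsifier of G. Suppose the Laplacian eigenvalue–degree bounds hold for both G and Ḡ, i.e. for every m ∈ {2,…,n}: d_m(H) − Δ(H_{l_m}) ≤ λ_m(H) ≤ d_{m−1}(H) + (m−1)·a(H) − δ(H_{s_{m−1}}) for H ∈ {G, Ḡ}. Then for every i ∈ {1,…,n−1}: d_i(Ḡ) ≥ ( d_{i+1}(G) − Δ(G_{l_{i+1}}) )·(1 − ε) − i·a(Ḡ) + δ(Ḡ_{s_i}), and moreover d_n(Ḡ) ≥ (1 − ε)·d_n(G). -/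

import Mathlib

open Matrix

/-- The (weighted) degree of vertex `v` in the weighted graph with adjacency
matrix `A`. -/
def wdeg {n : ℕ} (A : Matrix (Fin n) (Fin n) ℝ) (v : Fin n) : ℝ := ∑ u, A v u

/-- The Laplacian matrix `L = diag(deg) - A` of a weighted graph. -/
def lap {n : ℕ} (A : Matrix (Fin n) (Fin n) ℝ) : Matrix (Fin n) (Fin n) ℝ :=
  Matrix.diagonal (wdeg A) - A

/-- `Δ(G_{l_{k+1}})` (1-based `m = k + 1`): the maximum degree of the subgraph of
`G` induced by the highest-degree vertices `σ k, σ (k+1), …, σ (n-1)`, where `σ`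
sorts the vertices by nondecreasing degree. -/
noncomputable def maxDegTop {n : ℕ} (A : Matrix (Fin n) (Fin n) ℝ)
    (σ : Equiv.Perm (Fin n)) (k : Fin n) : ℝ :=
  (Finset.Ici k).sup' ⟨k, Finset.mem_Ici.mpr le_rfl⟩
    fun j => ∑ j' ∈ Finset.Ici k, A (σ j) (σ j')

/-- `δ(G_{s_{k+1}})` (1-based `m = k + 1`): the minimum degree of the subgraph of
`G` induced by the lowest-degree vertices `σ 0, σ 1, …, σ k`, where `σ` sorts the
vertices by nondecreasing degree. -/
noncomputable def minDegBot {n : ℕ} (A : Matrix (Fin n) (Fin n) ℝ)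
    (σ : Equiv.Perm (Fin n)) (k : Fin n) : ℝ :=
  (Finset.Iic k).inf' ⟨k, Finset.mem_Iic.mpr le_rfl⟩
    fun j => ∑ j' ∈ Finset.Iic k, A (σ j) (σ j')

/-- `a(G)`: the maximal edge weight of the weighted graph `G`. -/
noncomputable def maxWeight {n : ℕ} (hn : 0 < n)
    (A : Matrix (Fin n) (Fin n) ℝ) : ℝ :=
  Finset.univ.sup' (Finset.univ_nonempty_iff.mpr ⟨(⟨0, hn⟩, ⟨0, hn⟩)⟩)
    fun p : Fin n × Fin n => A p.1 p.2

/-!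
By the sparsifier inequality, the Laplacian form of `Ḡ` dominates `1 - ε` times that of `G`. Test
it on a nonzero vector orthogonal to the eigenvectors of `L(G)` of index below `k` and to those of
`L(Ḡ)` of index above `k`, which exists because these are only `n - 1` linear conditions: this
gives `(1 - ε) λ_k(G) ≤ λ_k(Ḡ)`, to be combined with the lower bound on `λ_{i+1}(G)` and the upper
bound on `λ_{i+1}(Ḡ)`. Tested on the basis vector of a vertex, it gives `(1 - ε) deg_G ≤ deg_Ḡ`,
hence the bound on the largest degree.
-/

section InnerProduct

open scoped InnerProductSpace

variable {𝕜 E ι : Type*} [RCLike 𝕜] [NormedAddCommGroup E] [InnerProductSpace 𝕜 E] [Fintype ι]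

lemma exists_ne_zero_forall_inner_eq_zero_of_card_lt_finrank (w : ι → E)
    (h : Fintype.card ι < Module.finrank 𝕜 E) : ∃ x : E, x ≠ 0 ∧ ∀ i, ⟪w i, x⟫_𝕜 = 0 := by
  have : FiniteDimensional 𝕜 E := .of_finrank_pos (Nat.zero_lt_of_lt h)
  let F : E →ₗ[𝕜] ι → 𝕜 := LinearMap.pi fun i => innerₛₗ 𝕜 (w i)
  have hF : LinearMap.ker F ≠ ⊥ := F.ker_ne_bot_of_finrank_lt (by simpa using h)
  obtain ⟨x, hx, hx0⟩ := Submodule.exists_mem_ne_zero_of_ne_bot hF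
  exact ⟨x, hx0, congrFun (LinearMap.mem_ker.mp hx)⟩

lemma exists_ne_zero_inner_eq_zero_of_lt_of_gt [LinearOrder ι] (u v : ι → E) (k : ι)
    (h : Fintype.card ι ≤ Module.finrank 𝕜 E) :
    ∃ x : E, x ≠ 0 ∧ (∀ j < k, ⟪u j, x⟫_𝕜 = 0) ∧ ∀ j > k, ⟪v j, x⟫_𝕜 = 0 := by
  have hcard : Fintype.card {j // j ≠ k} < Module.finrank 𝕜 E :=
    (Fintype.card_subtype_lt fun hk => hk rfl).trans_le h
  obtain ⟨x, hx0, hx⟩ := exists_ne_zero_forall_inner_eq_zero_of_card_lt_finrank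
    (fun j : {j // j ≠ k} => if j.1 < k then u j else v j) hcard
  refine ⟨x, hx0, fun j hj => ?_, fun j hj => ?_⟩
  · simpa [hj] using hx ⟨j, hj.ne⟩
  · simpa [hj.not_gt] using hx ⟨j, hj.ne'⟩

variable {b : OrthonormalBasis ι 𝕜 E} {T : E →ₗ[𝕜] E} {μ : ι → ℝ}

lemma re_inner_map_self_eq_sum_of_eigenbasis (hT : ∀ i, T (b i) = (μ i : 𝕜) • b i) (x : E) :
    RCLike.re ⟪x, T x⟫_𝕜 = ∑ i, μ i * ‖⟪b i, x⟫_𝕜‖ ^ 2 := by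
  have hTx : T x = ∑ i, ⟪b i, x⟫_𝕜 • (μ i : 𝕜) • b i := by
    conv_lhs => rw [← b.sum_repr' x]
    simp only [map_sum, map_smul, hT]
  rw [hTx, inner_sum, map_sum]
  refine Finset.sum_congr rfl fun i _ => ?_
  rw [inner_smul_right, inner_smul_right, mul_left_comm, RCLike.re_ofReal_mul,
    inner_mul_symm_re_eq_norm, norm_mul, norm_inner_symm x, sq]

lemma mul_norm_sq_le_re_inner_map_self_of_eigenbasis (hT : ∀ i, T (b i) = (μ i : 𝕜) • b i)
    {r : ℝ} {x : E} (h : ∀ i, μ i < r → ⟪b i, x⟫_𝕜 = 0) :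
    r * ‖x‖ ^ 2 ≤ RCLike.re ⟪x, T x⟫_𝕜 := by
  rw [re_inner_map_self_eq_sum_of_eigenbasis hT, ← b.sum_sq_norm_inner_right, Finset.mul_sum]
  refine Finset.sum_le_sum fun i _ => ?_
  rcases lt_or_ge (μ i) r with hi | hi
  · simp [h i hi]
  · gcongr

lemma re_inner_map_self_le_mul_norm_sq_of_eigenbasis (hT : ∀ i, T (b i) = (μ i : 𝕜) • b i)
    {r : ℝ} {x : E} (h : ∀ i, r < μ i → ⟪b i, x⟫_𝕜 = 0) :
    RCLike.re ⟪x, T x⟫_𝕜 ≤ r * ‖x‖ ^ 2 := by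
  have hneg := mul_norm_sq_le_re_inner_map_self_of_eigenbasis (b := b) (T := -T) (μ := -μ)
    (r := -r) (x := x) (by simp [hT]) fun i hi => h i (neg_lt_neg_iff.mp hi)
  simpa using hneg

lemma mul_eigenvalue_le_of_mul_re_inner_map_self_le [LinearOrder ι] {b' : OrthonormalBasis ι 𝕜 E}
    {T' : E →ₗ[𝕜] E} {μ' : ι → ℝ} (hT : ∀ i, T (b i) = (μ i : 𝕜) • b i)
    (hT' : ∀ i, T' (b' i) = (μ' i : 𝕜) • b' i) (hμ : Monotone μ) (hμ' : Monotone μ')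
    {c : ℝ} (hc : 0 ≤ c) (h : ∀ x, c * RCLike.re ⟪x, T x⟫_𝕜 ≤ RCLike.re ⟪x, T' x⟫_𝕜) (k : ι) :
    c * μ k ≤ μ' k := by
  obtain ⟨x, hx0, hbelow, habove⟩ := exists_ne_zero_inner_eq_zero_of_lt_of_gt (𝕜 := 𝕜) b b' k
    (Module.finrank_eq_card_basis b.toBasis).ge
  have hx : 0 < ‖x‖ ^ 2 := by positivity
  refine le_of_mul_le_mul_right ?_ hx
  calc c * μ k * ‖x‖ ^ 2 = c * (μ k * ‖x‖ ^ 2) := mul_assoc _ _ _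
    _ ≤ c * RCLike.re ⟪x, T x⟫_𝕜 := by
      gcongr
      exact mul_norm_sq_le_re_inner_map_self_of_eigenbasis hT
        fun i hi => hbelow i (hμ.reflect_lt hi)
    _ ≤ RCLike.re ⟪x, T' x⟫_𝕜 := h x
    _ ≤ μ' k * ‖x‖ ^ 2 := re_inner_map_self_le_mul_norm_sq_of_eigenbasis hT'
        fun i hi => habove i (hμ'.reflect_lt hi)

end InnerProduct

section HermitianMatrix

variable {𝕜 ι κ : Type*} [RCLike 𝕜] [Fintype ι] [DecidableEq ι]

lemma toEuclideanLin_reindex_eigenvectorBasis {M : Matrix ι ι 𝕜} (hM : M.IsHermitian) [Fintype κ]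
    (τ : κ ≃ ι) (j : κ) :
    toEuclideanLin M (hM.eigenvectorBasis.reindex τ.symm j) =
      ((hM.eigenvalues ∘ τ) j : 𝕜) • hM.eigenvectorBasis.reindex τ.symm j := by
  ext i
  simp [toLpLin_apply, hM.mulVec_eigenvectorBasis, RCLike.real_smul_eq_coe_mul]

lemma mul_eigenvalues_le_of_mul_re_dotProduct_mulVec_le [LinearOrder κ]
    {M N : Matrix ι ι 𝕜} (hM : M.IsHermitian) (hN : N.IsHermitian) {c : ℝ} (hc : 0 ≤ c)
    (h : ∀ x : ι → 𝕜, c * RCLike.re (star x ⬝ᵥ M *ᵥ x) ≤ RCLike.re (star x ⬝ᵥ N *ᵥ x))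
    {τ τ' : κ ≃ ι} (hτ : Monotone (hM.eigenvalues ∘ τ)) (hτ' : Monotone (hN.eigenvalues ∘ τ'))
    (k : κ) : c * hM.eigenvalues (τ k) ≤ hN.eigenvalues (τ' k) := by
  have : Fintype κ := .ofEquiv ι τ.symm
  refine mul_eigenvalue_le_of_mul_re_inner_map_self_le
    (toEuclideanLin_reindex_eigenvectorBasis hM τ) (toEuclideanLin_reindex_eigenvectorBasis hN τ')
    hτ hτ' hc (fun x => ?_) k
  simpa only [EuclideanSpace.inner_eq_star_dotProduct, toLpLin_apply, dotProduct_comm (_ *ᵥ _)]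
    using h x.ofLp

end HermitianMatrix

lemma lap_apply_self {n : ℕ} (A : Matrix (Fin n) (Fin n) ℝ) (v : Fin n) :
    lap A v v = wdeg A v - A v v := by
  simp [lap]

lemma mul_wdeg_le_wdeg_of_mul_lap_le {n : ℕ} {A A' : Matrix (Fin n) (Fin n) ℝ} {v : Fin n}
    (hv : A v v = 0) (hv' : A' v v = 0) {c : ℝ}
    (h : ∀ x : Fin n → ℝ, c * (x ⬝ᵥ lap A *ᵥ x) ≤ x ⬝ᵥ lap A' *ᵥ x) :
    c * wdeg A v ≤ wdeg A' v := by
  simpa [lap_apply_self, hv, hv'] using h (Pi.single v 1)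

lemma le_apply_of_monotone_comp_of_isTop {α β κ : Type*} [Preorder β] [Preorder κ] {f : α → β}
    {σ : κ ≃ α} (hσ : Monotone (f ∘ σ)) {m : κ} (hm : IsTop m) (v : α) : f v ≤ f (σ m) := by
  simpa using hσ (hm (σ.symm v))

/-- The paper's `1`-based `i` and `i + 1` are `i.castSucc` and `i.succ` here, so its factor `i` is
`i + 1`. -/
theorem sparsifier_degree_lower_bounds_general
    {n : ℕ} (A A' : Matrix (Fin (n + 1)) (Fin (n + 1)) ℝ)
    (hdiag : ∀ v, A v v = 0) (hdiag' : ∀ v, A' v v = 0) (ε : ℝ) (hε1 : ε ≤ 1)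
    (hspars : ∀ x : Fin (n + 1) → ℝ, (1 - ε) * (x ⬝ᵥ lap A *ᵥ x) ≤ x ⬝ᵥ lap A' *ᵥ x)
    (σ σ' : Equiv.Perm (Fin (n + 1)))
    (hσ : Monotone (wdeg A ∘ σ)) (hσ' : Monotone (wdeg A' ∘ σ'))
    (hL : (lap A).IsHermitian) (hL' : (lap A').IsHermitian)
    (τ τ' : Equiv.Perm (Fin (n + 1)))
    (hτ : Monotone (hL.eigenvalues ∘ τ)) (hτ' : Monotone (hL'.eigenvalues ∘ τ'))
    (hlower : ∀ i : Fin n,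
      wdeg A (σ i.succ) - maxDegTop A σ i.succ ≤ hL.eigenvalues (τ i.succ))
    (hupper' : ∀ i : Fin n, hL'.eigenvalues (τ' i.succ) ≤
      wdeg A' (σ' i.castSucc) + (i + 1 : ℝ) * maxWeight n.succ_pos A' -
        minDegBot A' σ' i.castSucc) :
    (∀ i : Fin n,
      (wdeg A (σ i.succ) - maxDegTop A σ i.succ) * (1 - ε) -
          (i + 1 : ℝ) * maxWeight n.succ_pos A' + minDegBot A' σ' i.castSucc ≤
        wdeg A' (σ' i.castSucc)) ∧
    (1 - ε) * wdeg A (σ (Fin.last n)) ≤ wdeg A' (σ' (Fin.last n)) := by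
  have hε : 0 ≤ 1 - ε := sub_nonneg.mpr hε1
  refine ⟨fun i => ?_, ?_⟩
  · have heig : (1 - ε) * hL.eigenvalues (τ i.succ) ≤ hL'.eigenvalues (τ' i.succ) :=
      mul_eigenvalues_le_of_mul_re_dotProduct_mulVec_le hL hL' hε
        (by simpa using hspars) hτ hτ' _
    linarith [mul_le_mul_of_nonneg_left (hlower i) hε, hupper' i]
  · exact (mul_wdeg_le_wdeg_of_mul_lap_le (hdiag _) (hdiag' _) hspars).trans
      (le_apply_of_monotone_comp_of_isTop hσ' Fin.le_last _)

/-- Lower bounds on the sorted degrees of an `ε`-spectral sparsifier `Ḡ`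
(adjacency `A'`) of `G` (adjacency `A`): assuming the Laplacian
eigenvalue–degree bounds for both graphs, for every `i ∈ {1, …, n-1}`,
`d_i(Ḡ) ≥ (d_{i+1}(G) - Δ(G_{l_{i+1}}))(1 - ε) - i a(Ḡ) + δ(Ḡ_{s_i})`,
and `d_n(Ḡ) ≥ (1 - ε) d_n(G)`. -/
theorem sparsifier_degree_lower_bounds
    {n : ℕ} (hn : 2 ≤ n) (A A' : Matrix (Fin n) (Fin n) ℝ)
    (hsymm : A.IsSymm) (hnonneg : ∀ u v, 0 ≤ A u v) (hdiag : ∀ v, A v v = 0)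
    (hsymm' : A'.IsSymm) (hnonneg' : ∀ u v, 0 ≤ A' u v) (hdiag' : ∀ v, A' v v = 0)
    (ε : ℝ) (hε0 : 0 ≤ ε) (hε1 : ε < 1)
    (hspars : ∀ x : Fin n → ℝ,
      (1 - ε) * (x ⬝ᵥ (lap A).mulVec x) ≤ x ⬝ᵥ (lap A').mulVec x ∧
      x ⬝ᵥ (lap A').mulVec x ≤ (1 + ε) * (x ⬝ᵥ (lap A).mulVec x))
    (σ σ' : Equiv.Perm (Fin n))
    (hσ : Monotone (wdeg A ∘ σ)) (hσ' : Monotone (wdeg A' ∘ σ'))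
    (hL : (lap A).IsHermitian) (hL' : (lap A').IsHermitian)
    (τ τ' : Equiv.Perm (Fin n))
    (hτ : Monotone (hL.eigenvalues ∘ τ)) (hτ' : Monotone (hL'.eigenvalues ∘ τ'))
    (hboundG : ∀ (m : ℕ) (hm2 : 2 ≤ m) (hmn : m ≤ n),
      wdeg A (σ ⟨m - 1, by omega⟩) - maxDegTop A σ ⟨m - 1, by omega⟩ ≤
        hL.eigenvalues (τ ⟨m - 1, by omega⟩) ∧
      hL.eigenvalues (τ ⟨m - 1, by omega⟩) ≤
        wdeg A (σ ⟨m - 2, by omega⟩) + ((m : ℝ) - 1) * maxWeight (by omega) A -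
          minDegBot A σ ⟨m - 2, by omega⟩)
    (hboundG' : ∀ (m : ℕ) (hm2 : 2 ≤ m) (hmn : m ≤ n),
      wdeg A' (σ' ⟨m - 1, by omega⟩) - maxDegTop A' σ' ⟨m - 1, by omega⟩ ≤
        hL'.eigenvalues (τ' ⟨m - 1, by omega⟩) ∧
      hL'.eigenvalues (τ' ⟨m - 1, by omega⟩) ≤
        wdeg A' (σ' ⟨m - 2, by omega⟩) + ((m : ℝ) - 1) * maxWeight (by omega) A' -
          minDegBot A' σ' ⟨m - 2, by omega⟩) :
    (∀ (i : ℕ) (hi1 : 1 ≤ i) (hin : i ≤ n - 1),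
      (wdeg A (σ ⟨i, by omega⟩) - maxDegTop A σ ⟨i, by omega⟩) * (1 - ε) -
          (i : ℝ) * maxWeight (by omega) A' + minDegBot A' σ' ⟨i - 1, by omega⟩ ≤
        wdeg A' (σ' ⟨i - 1, by omega⟩)) ∧
    (1 - ε) * wdeg A (σ ⟨n - 1, by omega⟩) ≤ wdeg A' (σ' ⟨n - 1, by omega⟩) := by
  obtain ⟨n, rfl⟩ := Nat.exists_eq_add_one.mpr (Nat.zero_lt_of_lt hn)
  obtain ⟨hdeg, hlast⟩ := sparsifier_degree_lower_bounds_general A A' hdiag hdiag' ε hε1.le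
    (fun x => (hspars x).1) σ σ' hσ hσ' hL hL' τ τ' hτ hτ'
    (fun i => (hboundG (i + 2) (by omega) (by omega)).1)
    fun i => by
      have hcast : ((i + 2 : ℕ) : ℝ) - 1 = i + 1 := by push_cast; ring
      simpa only [hcast] using! (hboundG' (i + 2) (by omega) (by omega)).2
  refine ⟨fun i hi1 hin => ?_, hlast⟩
  obtain ⟨i, rfl⟩ := Nat.exists_eq_add_one.mpr hi1
  simpa only [Nat.cast_add_one] using! hdeg ⟨i, hin⟩
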